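/- arXiv:1910.07299 — 3 statements merged into one kernel-verified Lean document; each statement's English description precedes it below -/
import Mathlib

section
/- Let M be an acyclic module over a finite alphabet Λ with finite node set S and finite input set I. Then every node s ∈ S has exactly one output function of minimal delay: the set of integers m ≥ 1 for which s admits an output function of delay m is nonempty, and letting d be its minimum, there is a unique function O_s : (Λ^I)^d → Λ such that M(x,J)_s = O_s(J) for every x ∈ Λ^S and every sequence J of d input configurations. -/
/-- A module over alphabet `Λ` with node set `S` and input set `I`:
a family of local functions `f s : Λ^S → Λ^I → Λ`. -/
structure AModule (Λ S I : Type) where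
  f : S → (S → Λ) → (I → Λ) → Λ

namespace AModule

variable {Λ S I : Type}

/-- One-step update `M(x,i)`. -/
def upd (M : AModule Λ S I) (x : S → Λ) (i : I → Λ) : S → Λ :=
  fun s => M.f s x i

/-- Iterated update `M(x,(i_1,…,i_m))`, defined by
`M(x,∅) = x` and `M(x,(i_1,…,i_m)) = M(M(x,i_1),(i_2,…,i_m))`. -/
def seqUpd (M : AModule Λ S I) (x : S → Λ) {m : ℕ} (J : Fin m → I → Λ) : S → Λ :=
  (List.ofFn J).foldl M.upd x

/-- Node `s` influences node `s'`: two configurations over `S ∪ I` differing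
exactly at `s` (so with the same input part) on which `f_{s'}` differs. -/
def Influences (M : AModule Λ S I) (s s' : S) : Prop :=
  ∃ (x x' : S → Λ) (i : I → Λ),
    (∀ r, r ≠ s → x r = x' r) ∧ x s ≠ x' s ∧ M.f s' x i ≠ M.f s' x' i

/-- `M` is acyclic: its interaction digraph has no directed cycle. -/
def Acyclic (M : AModule Λ S I) : Prop :=
  ∀ s, ¬ Relation.TransGen M.Influences s s

/-- `O` is an output function of delay `m` for node `s`. -/
def IsOutputFn (M : AModule Λ S I) (s : S) {m : ℕ}
    (O : (Fin m → I → Λ) → Λ) : Prop :=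
  ∀ (x : S → Λ) (J : Fin m → I → Λ), M.seqUpd x J s = O J

/-- The set of delays `m ≥ 1` for which `s` admits an output function. -/
def delaySet (M : AModule Λ S I) (s : S) : Set ℕ :=
  {m | 1 ≤ m ∧ ∃ O : (Fin m → I → Λ) → Λ, M.IsOutputFn s O}

/-- The complete recursive wiring `↻_ω M` as a map on configurations:
`F(x)_s = f_s(x, (x_{ω(α)})_{α ∈ I})`. -/
def wireF (M : AModule Λ S I) (ω : I → S) : (S → Λ) → (S → Λ) :=
  fun x => M.upd x (fun α => x (ω α))

/-- The input sequence of length `k` generated by `x`: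
`Ĵ(x)^k_ℓ = F^{ℓ-1}(x)|_{ω(I)}`. -/
def genSeq (M : AModule Λ S I) (ω : I → S) (x : S → Λ) (k : ℕ) :
    Fin k → I → Λ :=
  fun ℓ α => (M.wireF ω)^[ℓ.val] x (ω α)

end AModule

/-!
The state of a node after an update is determined by the input and by the previous states of the
nodes influencing it: coordinate sets on which a function depends are closed under intersection, so
from a finite set of coordinates those without influence can be discarded one by one. If the
influencing nodes forget the initial configuration within `m` updates, then so does the node itself
within `m + 1` updates. Forgetting therefore propagates along influences by well-founded induction;
once a node has forgotten the initial configuration, its state is a function of the input sequence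
alone.
-/

section CoordinateSets

variable {ι β : Type*} {α : ι → Type*} {g : (Π i, α i) → β} {A B F : Set ι}

theorem dependsOn_inter (hA : DependsOn g A) (hB : DependsOn g B) : DependsOn g (A ∩ B) := by
  classical
  intro x y hxy
  calc
    g x = g (A.piecewise x y) := hA fun i hi => (A.piecewise_eq_of_mem x y hi).symm
    _ = g y := hB fun i hiB => by
      by_cases hiA : i ∈ A
      · rw [A.piecewise_eq_of_mem x y hiA, hxy i ⟨hiA, hiB⟩]
      · exact A.piecewise_eq_of_notMem x y hiA

theorem dependsOn_sdiff_of_finite (hA : DependsOn g A) (hF : F.Finite)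
    (hg : ∀ a ∈ F, DependsOn g {a}ᶜ) : DependsOn g (A \ F) := by
  induction F, hF using Set.Finite.induction_on with
  | empty => simpa only [Set.sdiff_empty] using hA
  | @insert a F _ _ ih =>
    have hinsert : A \ insert a F = (A \ F) ∩ {a}ᶜ := by grind
    rw [hinsert]
    exact dependsOn_inter (ih fun b hb => hg b (Set.mem_insert_of_mem a hb))
      (hg a (Set.mem_insert a F))

end CoordinateSets

namespace AModule

variable {Λ S I : Type} {M : AModule Λ S I} {r s : S} {m n : ℕ}

section Influences

/-- A module is locally finite if each local function reads only finitely many nodes, in a set that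
is the same for all input configurations, so that each node is influenced by finitely many nodes.
This lets the argument reach infinite node sets. -/
def IsLocallyFinite (M : AModule Λ S I) : Prop :=
  ∀ s, ∃ T : Finset S, ∀ i, DependsOn (M.f s · i) T

theorem isLocallyFinite_of_finite [Finite S] (M : AModule Λ S I) : M.IsLocallyFinite := by
  cases nonempty_fintype S
  refine fun s => ⟨Finset.univ, fun i => ?_⟩
  rw [Finset.coe_univ]
  exact dependsOn_univ _

theorem Influences.mem_of_dependsOn {T : Set S} (hr : M.Influences r s)
    (hT : ∀ i, DependsOn (M.f s · i) T) : r ∈ T := by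
  by_contra hrT
  obtain ⟨x, y, i, hxy, -, hne⟩ := hr
  exact hne (hT i fun t ht => hxy t (ne_of_mem_of_not_mem ht hrT))

theorem dependsOn_compl_singleton_of_not_influences (hr : ¬ M.Influences r s) (i : I → Λ) :
    DependsOn (M.f s · i) {r}ᶜ := by
  intro x y hxy
  by_contra hne
  have hxr : x r ≠ y r := fun hxr => hne <| congrArg (M.f s · i) <| funext fun t => by
    obtain rfl | htr := eq_or_ne t r
    exacts [hxr, hxy t htr]
  exact hr ⟨x, y, i, hxy, hxr, hne⟩

theorem IsLocallyFinite.dependsOn_influences (hfin : M.IsLocallyFinite) (s : S) (i : I → Λ) :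
    DependsOn (M.f s · i) {r | M.Influences r s} := by
  obtain ⟨T, hT⟩ := hfin s
  have hdiff : DependsOn (M.f s · i) (T \ (T \ {r | M.Influences r s})) :=
    dependsOn_sdiff_of_finite (hT i) T.finite_toSet.sdiff
      fun r hr => dependsOn_compl_singleton_of_not_influences hr.2 i
  rw [Set.sdiff_sdiff_right_self] at hdiff
  exact hdiff.mono Set.inter_subset_right

theorem Acyclic.wellFounded_influences [Finite S] (hM : M.Acyclic) : WellFounded M.Influences :=
  haveI : Std.Irrefl (Relation.TransGen M.Influences) := ⟨hM⟩
  Subrelation.wf Relation.TransGen.single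
    (Finite.wellFounded_of_trans_of_irrefl (Relation.TransGen M.Influences))

end Influences

section Forgetting

theorem seqUpd_succ (M : AModule Λ S I) (x : S → Λ) (J : Fin (m + 1) → I → Λ) :
    M.seqUpd x J = M.seqUpd (M.upd x (J 0)) (Fin.tail J) := by
  simp only [seqUpd, List.ofFn_succ, List.foldl_cons, Fin.tail_def]

theorem seqUpd_succ_last (M : AModule Λ S I) (x : S → Λ) (J : Fin (m + 1) → I → Λ) :
    M.seqUpd x J = M.upd (M.seqUpd x (Fin.init J)) (J (Fin.last m)) := by
  simp only [seqUpd, List.ofFn_succ_last, List.foldl_append, List.foldl_cons, List.foldl_nil,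
    Fin.init_def]

/-- After `m` updates the state of the node `s` no longer depends on the initial configuration.
This says that `s` has an output function of delay `m`, without having to name that function. -/
def ForgetsWithin (M : AModule Λ S I) (s : S) (m : ℕ) : Prop :=
  ∀ (J : Fin m → I → Λ) (x y : S → Λ), M.seqUpd x J s = M.seqUpd y J s

theorem ForgetsWithin.mono (hs : M.ForgetsWithin s m) (hmn : m ≤ n) : M.ForgetsWithin s n := by
  induction n, hmn using Nat.le_induction with
  | base => exact hs
  | succ n _ ih =>
    intro J x y
    simp only [seqUpd_succ]
    exact ih _ _ _

theorem ForgetsWithin.exists_isOutputFn [Nonempty Λ] (hs : M.ForgetsWithin s m) :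
    ∃ O : (Fin m → I → Λ) → Λ, M.IsOutputFn s O := by
  obtain ⟨x₀⟩ : Nonempty (S → Λ) := inferInstance
  exact ⟨fun J => M.seqUpd x₀ J s, fun x J => hs J x x₀⟩

theorem IsLocallyFinite.forgetsWithin_succ (hfin : M.IsLocallyFinite)
    (hs : ∀ r, M.Influences r s → M.ForgetsWithin r m) : M.ForgetsWithin s (m + 1) := by
  intro J x y
  rw [seqUpd_succ_last, seqUpd_succ_last]
  exact hfin.dependsOn_influences s (J (Fin.last m)) fun r hr => hs r hr (Fin.init J) x y

theorem IsLocallyFinite.exists_forgetsWithin_succ (hfin : M.IsLocallyFinite)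
    (hwf : WellFounded M.Influences) (s : S) : ∃ m, M.ForgetsWithin s (m + 1) := by
  induction s using hwf.induction with
  | _ s ih =>
    choose! m hm using ih
    obtain ⟨T, hT⟩ := hfin s
    refine ⟨T.sup (m · + 1), hfin.forgetsWithin_succ fun r hr => (hm r hr).mono ?_⟩
    exact Finset.le_sup (f := (m · + 1)) (hr.mem_of_dependsOn hT)

end Forgetting

theorem IsOutputFn.unique [Nonempty Λ] {O O' : (Fin m → I → Λ) → Λ}
    (hO : M.IsOutputFn s O) (hO' : M.IsOutputFn s O') : O = O' := by
  obtain ⟨x₀⟩ : Nonempty (S → Λ) := inferInstance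
  exact funext fun J => (hO x₀ J).symm.trans (hO' x₀ J)

theorem IsLocallyFinite.delaySet_nonempty [Nonempty Λ] (hfin : M.IsLocallyFinite)
    (hwf : WellFounded M.Influences) (s : S) : (M.delaySet s).Nonempty := by
  obtain ⟨m, hm⟩ := hfin.exists_forgetsWithin_succ hwf s
  exact ⟨m + 1, Nat.le_add_left 1 m, hm.exists_isOutputFn⟩

end AModule

theorem statement2_general {Λ S I : Type} [Nonempty Λ] (M : AModule Λ S I)
    (hfin : M.IsLocallyFinite) (hwf : WellFounded M.Influences) (s : S) :
    ∃ d : ℕ, IsLeast (M.delaySet s) d ∧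
      ∃! O : (Fin d → I → Λ) → Λ, M.IsOutputFn s O := by
  have hd : IsLeast (M.delaySet s) (sInf (M.delaySet s)) :=
    isLeast_csInf (hfin.delaySet_nonempty hwf s)
  exact ⟨_, hd, existsUnique_of_exists_of_unique hd.1.2 fun _ _ hO hO' => hO.unique hO'⟩

/-- every node of an acyclic module has exactly one output
function of minimal delay. -/
theorem statement2 {Λ S I : Type} [Fintype Λ] [Fintype S] [Fintype I]
    (hΛ : 2 ≤ Fintype.card Λ)
    (M : AModule Λ S I) (hM : M.Acyclic) (s : S) :
    ∃ d : ℕ, IsLeast (M.delaySet s) d ∧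
      ∃! O : (Fin d → I → Λ) → Λ, M.IsOutputFn s O := by
  have : Nonempty Λ := Fintype.card_pos_iff.mp (Nat.zero_lt_of_lt hΛ)
  exact statement2_general M M.isLocallyFinite_of_finite hM.wellFounded_influences s
end

section
/- Let F be an automata network over a finite alphabet Λ with finite node set S of size n whose interaction digraph is acyclic. Then F has a unique fixed point x*, and every configuration converges to it under the parallel update: F^n(x) = x* for every x ∈ Λ^S. -/
/-- Node `s` influences node `s'` in an automata network with parallel update
`F`: two configurations differing exactly at `s` on which `F(·)_{s'}`
differs. -/
def ANInfluences {Λ S : Type} (F : (S → Λ) → (S → Λ)) (s s' : S) : Prop :=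
  ∃ x x' : S → Λ, (∀ r, r ≠ s → x r = x' r) ∧ x s ≠ x' s ∧ F x s' ≠ F x' s'

/-!
Since `S` is finite, one passes between two configurations by changing one coordinate at a time, so
`F(x)_s` depends only on the coordinates that influence `s`. Rank each node by its number of proper
ancestors in the interaction digraph. By acyclicity the rank is less than `n` and increases strictly
along arcs, so by induction on `k` the `k`-th iterate forgets the initial configuration at every
node of rank less than `k`. Hence `F^n` is constant, and its value is the fixed point.
-/

section ProductSpace

variable {ι : Type*} {α : ι → Type*} {β : Type*}

open Function in
theorem dependsOn_of_forall_update_eq [Finite ι] [DecidableEq ι] {f : (∀ i, α i) → β} {s : Set ι}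
    (hf : ∀ i ∉ s, ∀ x a, f (update x i a) = f x) : DependsOn f s := by
  have := Fintype.ofFinite ι
  intro x y hxy
  have f_piecewise (T : Finset ι) : f (T.piecewise y x) = f x := by
    induction T using Finset.induction_on with
    | empty => rw [Finset.piecewise_empty]
    | insert i T hiT ih =>
      rw [Finset.piecewise_insert]
      by_cases hi : i ∈ s
      · have update_y_eq : update (T.piecewise y x) i (y i) = T.piecewise y x := by
          rw [update_eq_self_iff, Finset.piecewise_eq_of_notMem _ _ _ hiT, hxy i hi]
        rw [update_y_eq, ih]
      · rw [hf i hi, ih]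
  rw [← f_piecewise Finset.univ, Finset.piecewise_univ]

theorem iterate_apply_eq_of_rank_lt {F : (∀ i, α i) → ∀ i, α i} {rank : ι → ℕ}
    (hF : ∀ i, DependsOn (F · i) {j | rank j < rank i}) {k : ℕ} {i : ι} (hi : rank i < k)
    (x y : ∀ i, α i) : F^[k] x i = F^[k] y i := by
  induction k generalizing i with
  | zero => exact absurd hi (Nat.not_lt_zero _)
  | succ k ih =>
    rw [Function.iterate_succ_apply', Function.iterate_succ_apply']
    exact hF i fun j hj => ih (hj.trans_le (Nat.le_of_lt_succ hi))

end ProductSpace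

theorem exists_rank_lt_card {α : Type*} [Finite α] {r : α → α → Prop}
    (hr : ∀ a, ¬ Relation.TransGen r a a) :
    ∃ rank : α → ℕ, (∀ a, rank a < Nat.card α) ∧ ∀ a b, r a b → rank a < rank b := by
  let ancestors (a : α) : Set α := {b | Relation.TransGen r b a}
  refine ⟨fun a => (ancestors a).ncard, fun a => Set.ncard_lt_card ?_, fun a b hab => ?_⟩
  · exact (Set.ne_univ_iff_exists_notMem _).mpr ⟨a, hr a⟩
  · have ancestors_subset : ancestors a ⊆ ancestors b := fun c hca => hca.tail hab
    exact Set.ncard_lt_ncard <|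
      (Set.ssubset_iff_of_subset ancestors_subset).mpr ⟨a, Relation.TransGen.single hab, hr a⟩

theorem exists_unique_fixedPoint_of_iterate_const {α : Type*} [Nonempty α] {f : α → α} {n : ℕ}
    (hf : ∀ x y, f^[n] x = f^[n] y) :
    ∃ p, f p = p ∧ (∀ x, f^[n] x = p) ∧ ∀ y, f y = y → y = p := by
  obtain ⟨x₀⟩ := ‹Nonempty α›
  refine ⟨f^[n] x₀, ?_, fun x => hf x x₀, fun y hy => ?_⟩
  · rw [← Function.iterate_succ_apply' f, Function.iterate_succ_apply, hf]
  · rw [← hf y, Function.iterate_fixed hy]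

section AutomataNetwork

variable {Λ S : Type}

open Function in
theorem dependsOn_setOf_anInfluences [Finite S] (F : (S → Λ) → (S → Λ)) (s : S) :
    DependsOn (F · s) {r | ANInfluences F r s} := by
  classical
  refine dependsOn_of_forall_update_eq fun r hr x a => ?_
  by_contra hne
  have ne_at_r : update x r a r ≠ x r := fun h => hne <| by
    rw [update_self] at h
    rw [h, update_eq_self]
  exact hr ⟨update x r a, x, fun t ht => update_of_ne ht a x, ne_at_r, hne⟩

theorem iterate_card_eq_of_acyclic [Finite S] {F : (S → Λ) → (S → Λ)}
    (hacyclic : ∀ s, ¬ Relation.TransGen (ANInfluences F) s s) (x y : S → Λ) :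
    F^[Nat.card S] x = F^[Nat.card S] y := by
  obtain ⟨rank, rank_lt_card, rank_lt_rank⟩ := exists_rank_lt_card hacyclic
  have dependsOn_lower (s : S) : DependsOn (F · s) {r | rank r < rank s} :=
    (dependsOn_setOf_anInfluences F s).mono fun r => rank_lt_rank r s
  exact funext fun s => iterate_apply_eq_of_rank_lt dependsOn_lower (rank_lt_card s) x y

end AutomataNetwork

theorem statement13_general {Λ S : Type} [Nonempty Λ] [Finite S] (F : (S → Λ) → (S → Λ))
    (hacyclic : ∀ s, ¬ Relation.TransGen (ANInfluences F) s s) :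
    ∃ xs : S → Λ, F xs = xs ∧ (∀ x : S → Λ, F^[Nat.card S] x = xs) ∧
      ∀ y : S → Λ, F y = y → y = xs :=
  exists_unique_fixedPoint_of_iterate_const (iterate_card_eq_of_acyclic hacyclic)

/-- an acyclic automata network on `n` nodes has a unique fixed
point, to which every configuration converges in `n` parallel steps. -/
theorem statement13 {Λ S : Type} [Fintype Λ] [Fintype S]
    (hΛ : 2 ≤ Fintype.card Λ)
    (F : (S → Λ) → (S → Λ))
    (hacyclic : ∀ s : S, ¬ Relation.TransGen (ANInfluences F) s s) :
    ∃ xs : S → Λ, F xs = xs ∧ (∀ x : S → Λ, F^[Fintype.card S] x = xs) ∧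
      ∀ y : S → Λ, F y = y → y = xs := by
  have : Nonempty Λ := Fintype.card_pos_iff.mp (by omega)
  simpa only [Nat.card_eq_fintype_card] using statement13_general F hacyclic
end

section
/- Let M be an acyclic module over a finite alphabet Λ with input set I and node set S such that every node admits an output function of delay at most D, let ω : I → S be total, let F = ↻_ω M, let c ≥ 1, and let k be a multiple of c with k ≥ D. Then F has a configuration x with F^c(x) = x if and only if there exists a sequence J of c input configurations such that, writing J^{k/c} for the (k/c)-fold concatenation of J and x := M(J^{k/c}) (the common value of M(x₀, J^{k/c}) over all starting configurations x₀), the input sequence generated by x of length c satisfies Ĵ(x)^c = J. -/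
/-!
Feeding the word `J` to `M` is a self-map `x ↦ M(x, J)` of the configurations, and feeding
`J^{k/c}` is its `(k/c)`-th iterate. Once `k` reaches every delay, that iterate forgets its starting
configuration, so its common value `M(J^{k/c})` is the only fixed point of `x ↦ M(x, J)`. On the
other hand `F^c(x) = M(x, Ĵ(x)^c)`, so `x` has period `c` under `F` exactly when `x` is a fixed
point of `y ↦ M(y, J)` for `J = Ĵ(x)^c`.
-/

open Function

theorem isFixedPt_iff_forall_iterate_eq {α : Type*} {f : α → α} {n : ℕ}
    (hf : ∀ x y, f^[n] x = f^[n] y) {x : α} : IsFixedPt f x ↔ ∀ y, f^[n] y = x := by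
  constructor
  · intro hx y
    exact (hf y x).trans (hx.iterate n)
  · intro h
    calc
      f x = f (f^[n] x) := by rw [h]
      _ = f^[n] (f x) := (Function.Commute.refl f).iterate_right n x
      _ = x := h (f x)

namespace AModule

variable {Λ S I : Type} (M : AModule Λ S I)

theorem seqUpd_append (x : S → Λ) {m n : ℕ} (J : Fin m → I → Λ) (K : Fin n → I → Λ) :
    M.seqUpd x (Fin.append J K) = M.seqUpd (M.seqUpd x J) K := by
  simp only [seqUpd, List.ofFn_fin_append, List.foldl_append]

theorem seqUpd_repeat (x : S → Λ) {c : ℕ} (J : Fin c → I → Λ) (n : ℕ) :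
    M.seqUpd x (Fin.repeat n J) = (M.seqUpd · J)^[n] x := by
  simp only [seqUpd, List.ofFn_fin_repeat]
  induction n generalizing x with
  | zero => rfl
  | succ n ih =>
    rw [List.replicate_succ, List.flatten_cons, List.foldl_append, ih, iterate_succ_apply]

theorem seqUpd_genSeq (ω : I → S) (x : S → Λ) (n : ℕ) :
    M.seqUpd x (M.genSeq ω x n) = (M.wireF ω)^[n] x := by
  induction n with
  | zero => rfl
  | succ n ih =>
    calc
      M.seqUpd x (M.genSeq ω x (n + 1))
          = M.upd (M.seqUpd x (M.genSeq ω x n)) (M.genSeq ω x (n + 1) (Fin.last n)) := by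
        simp only [seqUpd, List.ofFn_succ_last, List.foldl_append, List.foldl_cons, List.foldl_nil]
        rfl
      _ = M.wireF ω ((M.wireF ω)^[n] x) := by rw [ih]; rfl
      _ = (M.wireF ω)^[n + 1] x := (iterate_succ_apply' ..).symm

theorem isPeriodicPt_wireF_iff {ω : I → S} {c : ℕ} {x : S → Λ} :
    IsPeriodicPt (M.wireF ω) c x ↔ IsFixedPt (M.seqUpd · (M.genSeq ω x c)) x := by
  rw [IsPeriodicPt, IsFixedPt, IsFixedPt, seqUpd_genSeq]

variable {M}

theorem IsOutputFn.comp_natAdd {s : S} {m : ℕ} {O : (Fin m → I → Λ) → Λ}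
    (hO : M.IsOutputFn s O) (n : ℕ) :
    M.IsOutputFn s fun J : Fin (n + m) → I → Λ => O fun i => J (Fin.natAdd n i) := by
  intro x J
  rw [← Fin.append_castAdd_natAdd (f := J), seqUpd_append, hO]
  simp only [Fin.append_right]

theorem seqUpd_eq_of_delay_le {k : ℕ}
    (hdelay : ∀ s, ∃ m ≤ k, ∃ O : (Fin m → I → Λ) → Λ, M.IsOutputFn s O)
    (J : Fin k → I → Λ) (x y : S → Λ) : M.seqUpd x J = M.seqUpd y J := by
  funext s
  obtain ⟨m, hm, O, hO⟩ := hdelay s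
  obtain ⟨n, rfl⟩ := Nat.exists_eq_add_of_le' hm
  exact (hO.comp_natAdd n x J).trans (hO.comp_natAdd n y J).symm

theorem isFixedPt_seqUpd_iff {c n : ℕ}
    (hdelay : ∀ s, ∃ m ≤ n * c, ∃ O : (Fin m → I → Λ) → Λ, M.IsOutputFn s O)
    {J : Fin c → I → Λ} {x : S → Λ} :
    IsFixedPt (M.seqUpd · J) x ↔ ∀ x₀, M.seqUpd x₀ (Fin.repeat n J) = x := by
  simp only [seqUpd_repeat]
  apply isFixedPt_iff_forall_iterate_eq
  intro y z
  simpa only [seqUpd_repeat] using seqUpd_eq_of_delay_le hdelay (Fin.repeat n J) y z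

end AModule

theorem statement15_general {Λ S I : Type} [Nonempty Λ] (M : AModule Λ S I) (ω : I → S) (c n : ℕ)
    (hdelay : ∀ s, ∃ m ≤ n * c, ∃ O : (Fin m → I → Λ) → Λ, M.IsOutputFn s O) :
    (∃ x : S → Λ, (M.wireF ω)^[c] x = x) ↔
      ∃ J : Fin c → I → Λ, ∀ x₀, M.genSeq ω (M.seqUpd x₀ (Fin.repeat n J)) c = J := by
  constructor
  · rintro ⟨x, hx⟩
    have hval := (AModule.isFixedPt_seqUpd_iff hdelay).mp (M.isPeriodicPt_wireF_iff.mp hx)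
    exact ⟨M.genSeq ω x c, fun x₀ => by rw [hval x₀]⟩
  · rintro ⟨J, hJ⟩
    obtain ⟨x₀⟩ : Nonempty (S → Λ) := inferInstance
    let x := M.seqUpd x₀ (Fin.repeat n J)
    have hfix : IsFixedPt (M.seqUpd · J) x :=
      (AModule.isFixedPt_seqUpd_iff hdelay).mpr fun y =>
        AModule.seqUpd_eq_of_delay_le hdelay _ y x₀
    refine ⟨x, M.isPeriodicPt_wireF_iff.mpr ?_⟩
    rwa [hJ x₀]

/-- for `c ≥ 1` and `k` a multiple of `c` with `k ≥ D`,
`F = ↻_ω M` has a configuration of period `c` iff there is a sequence `J` of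
`c` input configurations such that `x := M(J^{k/c})` (the common value over
all starting configurations of the update by the `(k/c)`-fold repetition of
`J`) generates the input sequence `Ĵ(x)^c = J`. -/
theorem statement15 {Λ S I : Type} [Fintype Λ] [Fintype S] [Fintype I]
    (hΛ : 2 ≤ Fintype.card Λ)
    (M : AModule Λ S I) (hM : M.Acyclic) (D : ℕ)
    (hdelay : ∀ s : S, ∃ m : ℕ, 1 ≤ m ∧ m ≤ D ∧
      ∃ O : (Fin m → I → Λ) → Λ, M.IsOutputFn s O)
    (ω : I → S) (c k : ℕ) (hc : 1 ≤ c) (hck : c ∣ k) (hkD : D ≤ k) :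
    (∃ x : S → Λ, (M.wireF ω)^[c] x = x) ↔
      ∃ J : Fin c → I → Λ, ∀ x₀ : S → Λ,
        M.genSeq ω
          (M.seqUpd x₀ (fun ℓ : Fin k => J ⟨ℓ.val % c, Nat.mod_lt _ hc⟩)) c
          = J := by
  have : Nonempty Λ := Fintype.card_pos_iff.mp (by omega)
  obtain ⟨n, rfl⟩ := exists_eq_mul_left_of_dvd hck
  -- `Fin.repeat n J` is definitionally the sequence `ℓ ↦ J (ℓ % c)`.
  exact statement15_general M ω c n fun s =>
    let ⟨m, _, hm, hO⟩ := hdelay s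
    ⟨m, hm.trans hkD, hO⟩
end
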